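/- Let d ≥ 2 be an integer and let T = (V,E) be a tournament that is 2-dominating. Suppose there exists W ⊆ V with |W| = d and a vertex v ∈ V such that v is the unique vertex u ∈ V with (w,u) ∈ E for all w ∈ W (i.e., W dominates exactly one vertex, namely v). Then T*, the digraph obtained from T by adding a loop at every vertex, is not (d+1)-dominating. -/

import Mathlib

/-- `E` is a tournament on `V`: loopless, and for all distinct `x,y` exactly one of
`(x,y)`, `(y,x)` is an edge. -/
def IsTournament {V : Type*} (E : V → V → Prop) : Prop :=
  (∀ x : V, ¬ E x x) ∧ ∀ x y : V, x ≠ y → (E x y ↔ ¬ E y x)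

/-- The restriction of the digraph `E` to `U` is `d`-dominating: every finite `S ⊆ U`
with `1 ≤ |S| ≤ d` has a common out-neighbor in `U`. -/
def DomOn {V : Type*} (E : V → V → Prop) (d : ℕ) (U : Set V) : Prop :=
  ∀ S : Finset V, ↑S ⊆ U → S.Nonempty → S.card ≤ d → ∃ w ∈ U, ∀ s ∈ S, E s w

/-- `T* `: the digraph obtained from `E` by adding a loop at every vertex. -/
def WithLoops {V : Type*} (E : V → V → Prop) : V → V → Prop :=
  fun x y => E x y ∨ x = y

/-!
If `W` has at most `k` common out-neighbors in `T`, then it has at most `k + 1` in `T*`: a further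
one must lie in `W`, and two such would be joined by edges in both directions. As `T` is
`(k + 1)`-dominating, all of them have edges to a single vertex `x`. A common out-neighbor in `T*`
of `W ∪ {x}` would be one of them and also receive an edge of `T*` from `x`, against asymmetry.
-/

theorem IsTournament.asymm {V : Type*} {E : V → V → Prop} (hE : IsTournament E) : Std.Asymm E where
  asymm x y hxy hyx := by
    have hne : x ≠ y := by
      rintro rfl
      exact hE.1 x hxy
    exact (hE.2 x y hne).1 hxy hyx

theorem DomOn.nonempty_inter_upperPolar {V : Type*} {E : V → V → Prop} {d : ℕ} {U S : Set V}
    (hE : DomOn E d U) (hU : U.Nonempty) (hSU : S ⊆ U) (hS : S.encard ≤ d) :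
    (U ∩ upperPolar E S).Nonempty := by
  rcases S.eq_empty_or_nonempty with rfl | hne
  · simpa only [upperPolar_empty, Set.inter_univ] using hU
  · lift S to Finset V using Set.finite_of_encard_le_coe hS
    obtain ⟨x, hxU, hx⟩ := hE S hSU (by exact_mod_cast hne) (by simpa using hS)
    exact ⟨x, hxU, hx⟩

namespace WithLoops

variable {V : Type*} {E : V → V → Prop}

theorem not_of_reverse_edge [Std.Asymm E] {x y : V} (hxy : E x y) : ¬ WithLoops E y x := by
  rintro (hyx | rfl)
  · exact asymm_of E hxy hyx
  · exact asymm_of E hxy hxy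

theorem subsingleton_inter_upperPolar [Std.Asymm E] (W : Set V) :
    (W ∩ upperPolar (WithLoops E) W).Subsingleton :=
  fun _ ⟨haW, ha⟩ _ ⟨hbW, hb⟩ => (hb haW).resolve_left fun hab => not_of_reverse_edge hab (ha hbW)

theorem upperPolar_subset_union (W : Set V) : upperPolar (WithLoops E) W ⊆ upperPolar E W ∪ W := by
  intro u hu
  by_cases huW : u ∈ W
  · exact .inr huW
  · exact .inl fun w hw => (hu hw).resolve_right fun hwu => huW (hwu ▸ hw)

theorem encard_inter_upperPolar_le [Std.Asymm E] (U W : Set V) :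
    (U ∩ upperPolar (WithLoops E) W).encard ≤ (U ∩ upperPolar E W).encard + 1 := by
  have hsub : U ∩ upperPolar (WithLoops E) W ⊆
      U ∩ upperPolar E W ∪ W ∩ upperPolar (WithLoops E) W := fun u ⟨huU, hu⟩ =>
    (upperPolar_subset_union W hu).imp (fun huE => ⟨huU, huE⟩) fun huW => ⟨huW, hu⟩
  calc (U ∩ upperPolar (WithLoops E) W).encard
      ≤ (U ∩ upperPolar E W).encard + (W ∩ upperPolar (WithLoops E) W).encard :=
        (Set.encard_le_encard hsub).trans (Set.encard_union_le _ _)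
    _ ≤ (U ∩ upperPolar E W).encard + 1 := by
        gcongr
        exact Set.encard_le_one_iff_subsingleton.2 (subsingleton_inter_upperPolar W)

theorem not_domOn_of_encard_inter_upperPolar_le [Std.Asymm E] {k d : ℕ} {U W : Set V}
    (hU : U.Nonempty) (hE : DomOn E k U) (hWU : W ⊆ U) (hW : W.encard ≤ d)
    (hk : (U ∩ upperPolar (WithLoops E) W).encard ≤ k) :
    ¬ DomOn (WithLoops E) (d + 1) U := by
  intro hloops
  obtain ⟨x, hxU, hx⟩ := hE.nonempty_inter_upperPolar hU Set.inter_subset_left hk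
  have hcard : (insert x W).encard ≤ (d + 1 : ℕ) := by
    push_cast
    exact (Set.encard_insert_le W x).trans (by gcongr)
  obtain ⟨u, huU, hu⟩ :=
    hloops.nonempty_inter_upperPolar hU (Set.insert_subset hxU hWU) hcard
  have hux : E u x := hx ⟨huU, upperPolar_anti _ (Set.subset_insert x W) hu⟩
  exact not_of_reverse_edge hux (hu (Set.mem_insert x W))

end WithLoops

theorem star_not_dominating_of_unique_general {V : Type*} {E : V → V → Prop} [Std.Asymm E]
    {k d : ℕ} {U W : Set V} (hU : U.Nonempty) (hE : DomOn E (k + 1) U) (hWU : W ⊆ U)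
    (hW : W.encard ≤ d) (hk : (U ∩ upperPolar E W).encard ≤ k) :
    ¬ DomOn (WithLoops E) (d + 1) U := by
  refine WithLoops.not_domOn_of_encard_inter_upperPolar_le hU hE hWU hW ?_
  push_cast
  exact (WithLoops.encard_inter_upperPolar_le U W).trans (by gcongr)

/-- Lemma: if `T` is a 2-dominating tournament and some set `W` of `d` vertices
dominates exactly one vertex `v`, then `T*` is not `(d+1)`-dominating. -/
theorem star_not_dominating_of_unique {V : Type*} (d : ℕ) (hd : 2 ≤ d)
    (E : V → V → Prop) (hT : IsTournament E)
    (h2 : DomOn E 2 (Set.univ : Set V))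
    (W : Finset V) (hW : W.card = d) (v : V)
    (hdom : ∀ w ∈ W, E w v)
    (huniq : ∀ u : V, (∀ w ∈ W, E w u) → u = v) :
    ¬ DomOn (WithLoops E) (d + 1) (Set.univ : Set V) := by
  have := hT.asymm
  have hle : (Set.univ ∩ upperPolar E (W : Set V)).encard ≤ (1 : ℕ) :=
    Set.encard_le_one_iff.2 fun a b ha hb => (huniq a ha.2).trans (huniq b hb.2).symm
  exact star_not_dominating_of_unique_general ⟨v, Set.mem_univ v⟩ h2 (Set.subset_univ _)
    (by rw [Set.encard_coe_eq_coe_finsetCard, hW]) hle
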